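/- If 𝔯 < 𝔡, then 𝔲 = 𝔯, i.e., if the reaping number is strictly smaller than the dominating number, then the ultrafilter number equals the reaping number. -/

import Mathlib

/-!
The inequality `𝔯 ≤ 𝔲` holds because an ultrafilter base is a reaping family
(`reapNumber_le_of_base`).

For `𝔲 ≤ 𝔯`, let `R` be a reaping family with `#R = 𝔯 < 𝔡`; it is infinite
(`not_reaping_of_finite`). For every finite `s ⊆ R` choose a monotone `h_s` such that `[k, h_s k)`
meets every member of `s`, for all `k` (`exists_next`). The fewer than `𝔡` functions `h_s ∘ h_s` do
not dominate some `g`. Iterating a monotone function above `g` from `0` gives an interval partition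
of `ω`, infinitely many of whose intervals `[a n, a (n + 1))` contain `[a n, h_s (a n))`, for each
`s` (`frequently_block`). Let `f` map each number to the index of its interval (`exists_blocks`).
Then the images `f[y]`, `y ∈ R`, have infinite finite intersections. They also decide every
`X ⊆ ω` modulo a finite set, because some `y ∈ R` is not split by `f⁻¹[X]` and so `f[y]` is almost
contained in or almost disjoint from `X`. Hence the images, together with the cofinite sets,
generate a non-principal ultrafilter with a base of cardinality `#R` (`exists_base`).
-/

open Cardinal

/-- `f <* g`: `g` eventually (strictly) dominates `f`. -/
def EvDominates (f g : ℕ → ℕ) : Prop :=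
  ∀ᶠ n in Filter.atTop, f n < g n

/-- The dominating number `𝔡`: the least cardinality of a family `F ⊆ ω^ω` such that
every `g ∈ ω^ω` is eventually dominated by a member of `F`. -/
noncomputable def domNumber : Cardinal :=
  sInf { c : Cardinal |
    ∃ F : Set (ℕ → ℕ), (∀ g : ℕ → ℕ, ∃ f ∈ F, EvDominates g f) ∧ c = #F }

/-- `x` splits `y`: both `x ∩ y` and `y \ x` are infinite. -/
def Splits (x y : Set ℕ) : Prop :=
  (x ∩ y).Infinite ∧ (y \ x).Infinite

/-- The reaping number `𝔯`: the least cardinality of a family `R` of infinite subsets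
of `ω` such that no single `x ⊆ ω` splits every member of `R`. -/
noncomputable def reapNumber : Cardinal :=
  sInf { c : Cardinal |
    ∃ R : Set (Set ℕ), (∀ y ∈ R, y.Infinite) ∧
      (∀ x : Set ℕ, ∃ y ∈ R, ¬ Splits x y) ∧ c = #R }

/-- `G` is a base of a non-principal ultrafilter on `ω`: all members of `G` belong to
the ultrafilter and every member of the ultrafilter contains some member of `G`. -/
def IsNonprincipalUltrafilterBase (G : Set (Set ℕ)) : Prop :=
  ∃ U : Ultrafilter ℕ, (∀ x : ℕ, {x} ∉ U) ∧ (∀ g ∈ G, g ∈ U) ∧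
    ∀ F ∈ U, ∃ g ∈ G, g ⊆ F

/-- The ultrafilter number `𝔲`: the least cardinality of a base for a non-principal
ultrafilter on `ω`. -/
noncomputable def ultraNumber : Cardinal :=
  sInf { c : Cardinal | ∃ G : Set (Set ℕ), IsNonprincipalUltrafilterBase G ∧ c = #G }

/-- The sum makes the bound monotone in `k` and larger than `k`. -/
lemma exists_next (s : Finset (Set ℕ)) (hs : ∀ y ∈ s, y.Infinite) :
    ∃ h : ℕ → ℕ, Monotone h ∧ ∀ k, k < h k ∧ ∀ y ∈ s, ∃ m ∈ y, k ≤ m ∧ m < h k := by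
  let N : Set ℕ → ℕ → ℕ := fun y k => sInf {m | m ∈ y ∧ k ≤ m}
  have hN : ∀ y ∈ s, ∀ k, N y k ∈ y ∧ k ≤ N y k := by
    intro y hy k
    have hne : {m | m ∈ y ∧ k ≤ m}.Nonempty := by
      obtain ⟨m, hm, hkm⟩ := (hs y hy).exists_gt k
      exact ⟨m, hm, hkm.le⟩
    exact Nat.sInf_mem hne
  refine ⟨fun k => ∑ i ∈ Finset.range (k + 1), (1 + ∑ y ∈ s, N y i), ?_, ?_⟩
  · intro k l hkl
    exact Finset.sum_le_sum_of_subset (Finset.range_mono (by omega))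
  · intro k
    have h1 : k + 1 ≤ ∑ i ∈ Finset.range (k + 1), (1 + ∑ y ∈ s, N y i) := by
      rw [Finset.sum_add_distrib]
      simp
    refine ⟨h1, fun y hy => ⟨N y k, (hN y hy k).1, (hN y hy k).2, ?_⟩⟩
    have h2 : N y k ≤ ∑ y ∈ s, N y k :=
      Finset.single_le_sum (f := fun y => N y k) (fun _ _ => Nat.zero_le _) hy
    have h3 : 1 + ∑ y ∈ s, N y k ≤ ∑ i ∈ Finset.range (k + 1), (1 + ∑ y ∈ s, N y i) :=
      Finset.single_le_sum (f := fun i => 1 + ∑ y ∈ s, N y i) (fun _ _ => Nat.zero_le _)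
        (Finset.self_mem_range_succ k)
    show N y k < ∑ i ∈ Finset.range (k + 1), (1 + ∑ y ∈ s, N y i)
    omega

lemma exists_blocks (a : ℕ → ℕ) (ha : StrictMono a) (h0 : a 0 = 0) :
    ∃ f : ℕ → ℕ, ∀ m n, f m = n ↔ a n ≤ m ∧ m < a (n + 1) := by
  have hex : ∀ m, ∃ n, a n ≤ m ∧ m < a (n + 1) := by
    intro m
    induction m with
    | zero => exact ⟨0, h0.le, h0.symm.trans_lt (ha Nat.zero_lt_one)⟩
    | succ m ih =>
      obtain ⟨n, h1, h2⟩ := ih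
      rcases Nat.lt_or_ge (m + 1) (a (n + 1)) with h | h
      · exact ⟨n, by omega, h⟩
      · have := ha (Nat.lt_add_one (n + 1))
        exact ⟨n + 1, h, by omega⟩
  choose f hf using hex
  refine ⟨f, fun m n => ⟨fun h => h ▸ hf m, fun h => ?_⟩⟩
  have h1 : f m < n + 1 := ha.lt_iff_lt.1 ((hf m).1.trans_lt h.2)
  have h2 : n < f m + 1 := ha.lt_iff_lt.1 (h.1.trans_lt (hf m).2)
  omega

lemma strictMono_iterate {G : ℕ → ℕ} (hG : ∀ k, k < G k) : StrictMono fun n => G^[n] 0 :=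
  strictMono_nat_of_lt_succ fun n => by
    rw [Function.iterate_succ_apply']
    exact hG _

/-- If `h (a n) > a (n + 1)` for all large `n`, where `a n = G^[n] 0`, then
`G k ≤ a (n + 2) < h (a (n + 1)) ≤ h (h (a n)) ≤ h (h k)` for `k ∈ [a n, a (n + 1))`,
so `h ∘ h` dominates `G`. -/
lemma frequently_block {G h : ℕ → ℕ} (hGm : Monotone G) (hG : ∀ k, k < G k) (hh : Monotone h)
    (hf : ∃ᶠ k in Filter.atTop, h (h k) ≤ G k) :
    ∃ᶠ n in Filter.atTop, h (G^[n] 0) ≤ G^[n + 1] 0 := by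
  by_contra hcon
  rw [Filter.not_frequently, Filter.eventually_atTop] at hcon
  obtain ⟨n₀, hn₀⟩ := hcon
  push Not at hn₀
  have ha := strictMono_iterate hG
  obtain ⟨f, hfb⟩ := exists_blocks _ ha rfl
  obtain ⟨k, hk, hle⟩ := (Filter.frequently_atTop.1 hf) (G^[n₀] 0)
  obtain ⟨h1, h2⟩ := (hfb k (f k)).1 rfl
  have hn : n₀ ≤ f k := by
    have : n₀ < f k + 1 := ha.lt_iff_lt.1 (hk.trans_lt h2)
    omega
  have e1 : G k ≤ G^[f k + 1 + 1] 0 := by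
    rw [Function.iterate_succ_apply']
    exact hGm h2.le
  have e2 := hn₀ (f k + 1) (by omega)
  have e3 : h (G^[f k + 1] 0) ≤ h (h (G^[f k] 0)) := hh (hn₀ (f k) hn).le
  have e4 : h (h (G^[f k] 0)) ≤ h (h k) := hh (hh h1)
  omega

/-- Finitely many infinite sets are split by the union of the even blocks of an interval partition
all of whose blocks meet all of them. -/
lemma not_reaping_of_finite (R : Set (Set ℕ)) (hR : ∀ y ∈ R, y.Infinite) (hfin : R.Finite) :
    ∃ x : Set ℕ, ∀ y ∈ R, Splits x y := by
  obtain ⟨h, -, hh⟩ := exists_next hfin.toFinset (by simpa using hR)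
  have ha := strictMono_iterate fun k => (hh k).1
  obtain ⟨f, hf⟩ := exists_blocks _ ha rfl
  have hmeet : ∀ y ∈ R, ∀ n, ∃ m ∈ y, f m = n ∧ n ≤ m := by
    intro y hy n
    obtain ⟨m, hm, h1, h2⟩ := (hh (h^[n] 0)).2 y (by simpa using hy)
    refine ⟨m, hm, (hf m n).2 ⟨h1, ?_⟩, ha.le_apply.trans h1⟩
    rwa [Function.iterate_succ_apply']
  refine ⟨{m | Even (f m)}, fun y hy => ⟨?_, ?_⟩⟩
  · refine Set.infinite_of_forall_exists_gt fun n => ?_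
    obtain ⟨m, hm, h1, h2⟩ := hmeet y hy (2 * (n + 1))
    exact ⟨m, ⟨by simp [h1], hm⟩, by omega⟩
  · refine Set.infinite_of_forall_exists_gt fun n => ?_
    obtain ⟨m, hm, h1, h2⟩ := hmeet y hy (2 * n + 1)
    exact ⟨m, ⟨hm, by simp [h1]⟩, by omega⟩

/-- The indices of the blocks (fibres of `f`) that meet every member of `s`. -/
def blockSet {R : Set (Set ℕ)} (f : ℕ → ℕ) (s : Finset R) : Set ℕ :=
  {n | ∀ y ∈ s, ∃ m ∈ y.1, f m = n}

lemma blockSet_anti {R : Set (Set ℕ)} (f : ℕ → ℕ) {s t : Finset R} (hst : s ⊆ t) :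
    blockSet f t ⊆ blockSet f s :=
  fun _ hn y hy => hn y (hst hy)

/-- The non-domination step: a single `f` makes every `blockSet f s` infinite. -/
lemma exists_blockSet_infinite (R : Set (Set ℕ)) (hR : ∀ y ∈ R, y.Infinite) (hinf : R.Infinite)
    (hd : #R < domNumber) : ∃ f : ℕ → ℕ, ∀ s : Finset R, (blockSet f s).Infinite := by
  classical
  have : Infinite R := hinf.to_subtype
  have hnext : ∀ s : Finset R, ∃ h : ℕ → ℕ, Monotone h ∧
      ∀ k, k < h k ∧ ∀ y ∈ s.image Subtype.val, ∃ m ∈ y, k ≤ m ∧ m < h k := by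
    intro s
    refine exists_next _ fun y hy => ?_
    obtain ⟨z, -, rfl⟩ := Finset.mem_image.1 hy
    exact hR _ z.2
  choose h hmono hh using hnext
  obtain ⟨g, hg⟩ : ∃ g : ℕ → ℕ, ∀ s : Finset R, ¬ EvDominates g (h s ∘ h s) := by
    by_contra! hcon
    refine hd.not_ge ?_
    calc domNumber ≤ #(Set.range fun s : Finset R => h s ∘ h s) := by
          refine csInf_le' ⟨_, fun g => ?_, rfl⟩
          obtain ⟨s, hs⟩ := hcon g
          exact ⟨_, ⟨s, rfl⟩, hs⟩
      _ ≤ #(Finset R) := mk_range_le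
      _ = #R := mk_finset_of_infinite R
  let G : ℕ → ℕ := fun k => ∑ i ∈ Finset.range (k + 1), (1 + g i)
  have hGm : Monotone G := fun k l hkl =>
    Finset.sum_le_sum_of_subset (Finset.range_mono (by omega))
  have hG : ∀ k, k < G k := fun k => by
    have : k + 1 ≤ ∑ i ∈ Finset.range (k + 1), (1 + g i) := by
      rw [Finset.sum_add_distrib]
      simp
    exact this
  have hgG : ∀ k, g k ≤ G k := fun k => by
    have : 1 + g k ≤ ∑ i ∈ Finset.range (k + 1), (1 + g i) :=
      Finset.single_le_sum (f := fun i => 1 + g i) (fun _ _ => Nat.zero_le _)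
        (Finset.self_mem_range_succ k)
    exact (Nat.le_add_left _ _).trans this
  obtain ⟨f, hf⟩ := exists_blocks _ (strictMono_iterate hG) rfl
  refine ⟨f, fun s => ?_⟩
  have hfr : ∃ᶠ k in Filter.atTop, h s (h s k) ≤ G k := by
    refine (Filter.not_eventually.1 (hg s)).mono fun k hk => ?_
    exact (not_lt.1 hk).trans (hgG k)
  have hbl := frequently_block hGm hG (hmono s) hfr
  refine (Nat.frequently_atTop_iff_infinite.1 hbl).mono fun n hn y hy => ?_
  obtain ⟨m, hm, h1, h2⟩ := (hh s (G^[n] 0)).2 y.1 (Finset.mem_image_of_mem _ hy)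
  exact ⟨m, hm, (hf m n).2 ⟨h1, h2.trans_le hn⟩⟩

lemma exists_base (R : Set (Set ℕ)) (hR : ∀ y ∈ R, y.Infinite)
    (hreap : ∀ x : Set ℕ, ∃ y ∈ R, ¬ Splits x y) (hinf : R.Infinite) (hd : #R < domNumber) :
    ∃ G : Set (Set ℕ), IsNonprincipalUltrafilterBase G ∧ #G ≤ #R := by
  classical
  obtain ⟨f, hf⟩ := exists_blockSet_infinite R hR hinf hd
  have : Infinite R := hinf.to_subtype
  let F : Filter ℕ :=
    { sets := {X | ∃ s : Finset R, (blockSet f s \ X).Finite}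
      univ_sets := ⟨∅, by simp⟩
      sets_of_superset := fun ⟨s, hs⟩ hXY => ⟨s, hs.subset (Set.sdiff_subset_sdiff_right hXY)⟩
      inter_sets := by
        rintro X Y ⟨s, hs⟩ ⟨t, ht⟩
        refine ⟨s ∪ t, (hs.union ht).subset fun n hn => ?_⟩
        by_cases hX : n ∈ X
        · exact Or.inr ⟨blockSet_anti f Finset.subset_union_right hn.1, fun hY => hn.2 ⟨hX, hY⟩⟩
        · exact Or.inl ⟨blockSet_anti f Finset.subset_union_left hn.1, hX⟩ }
  have hF : ∀ X, X ∈ F ↔ ∃ s : Finset R, (blockSet f s \ X).Finite := fun X => Iff.rfl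
  have hFinf : ∀ X ∈ F, X.Infinite := by
    rintro X ⟨s, hs⟩ hX
    exact hf s ((hs.union hX).subset fun n hn => by
      by_cases h : n ∈ X
      · exact Or.inr h
      · exact Or.inl ⟨hn, h⟩)
  have hdec : ∀ X, X ∈ F ∨ Xᶜ ∈ F := by
    intro X
    obtain ⟨y, hy, hns⟩ := hreap (f ⁻¹' X)
    have hmem : ∀ n ∈ blockSet f {(⟨y, hy⟩ : R)}, ∃ m ∈ y, f m = n :=
      fun n hn => hn ⟨y, hy⟩ (Finset.mem_singleton_self _)
    rw [Splits, not_and_or, Set.not_infinite, Set.not_infinite] at hns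
    rcases hns with h | h
    · right
      refine ⟨{⟨y, hy⟩}, (h.image f).subset ?_⟩
      rintro n ⟨hn, hnX⟩
      obtain ⟨m, hm, rfl⟩ := hmem n hn
      exact ⟨m, ⟨not_not.1 hnX, hm⟩, rfl⟩
    · left
      refine ⟨{⟨y, hy⟩}, (h.image f).subset ?_⟩
      rintro n ⟨hn, hnX⟩
      obtain ⟨m, hm, rfl⟩ := hmem n hn
      exact ⟨m, ⟨hm, hnX⟩, rfl⟩
  let U : Ultrafilter ℕ := Ultrafilter.ofComplNotMemIff F fun X =>
    ⟨fun h => (hdec X).resolve_right h, fun h h' => hFinf _ (Filter.inter_mem h h') (by simp)⟩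
  have hU : ∀ X, X ∈ U ↔ X ∈ F := fun X => Iff.rfl
  refine ⟨Set.range fun p : Finset R × ℕ => blockSet f p.1 \ Set.Iio p.2,
    ⟨U, fun x hx => hFinf _ hx (Set.finite_singleton x), ?_, ?_⟩, ?_⟩
  · rintro _ ⟨⟨s, n⟩, rfl⟩
    refine (hU _).2 ⟨s, (Set.finite_Iio n).subset ?_⟩
    rintro m ⟨h1, h2⟩
    by_contra h3
    exact h2 ⟨h1, h3⟩
  · rintro X ⟨s, hs⟩
    obtain ⟨b, hb⟩ := hs.bddAbove
    refine ⟨_, ⟨(s, b + 1), rfl⟩, fun m hm => ?_⟩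
    by_contra hX
    exact hm.2 (Nat.lt_succ_of_le (hb ⟨hm.1, hX⟩))
  · calc _ ≤ #(Finset R × ℕ) := mk_range_le
      _ = #R * ℵ₀ := by simp
      _ = #R := mul_aleph0_eq (aleph0_le_mk R)

lemma reapNumber_le_of_base {G : Set (Set ℕ)} (hG : IsNonprincipalUltrafilterBase G) :
    reapNumber ≤ #G := by
  obtain ⟨U, hnp, hGU, hbase⟩ := hG
  have hUinf : ∀ X ∈ U, X.Infinite := by
    intro X hX hfin
    obtain ⟨x, -, hx⟩ := (Ultrafilter.finite_biUnion_mem_iff (s := fun x : ℕ => {x}) hfin).1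
      (by simpa using hX)
    exact hnp x hx
  refine csInf_le' ⟨G, fun y hy => hUinf y (hGU y hy), fun x => ?_, rfl⟩
  rcases U.mem_or_compl_mem x with h | h
  · obtain ⟨y, hy, hyx⟩ := hbase _ h
    exact ⟨y, hy, fun hs => hs.2 (by simp [Set.sdiff_eq_empty.2 hyx])⟩
  · obtain ⟨y, hy, hyx⟩ := hbase _ h
    refine ⟨y, hy, fun hs => hs.1 ?_⟩
    rw [Set.inter_comm, (Set.subset_compl_iff_disjoint_right.1 hyx).inter_eq]
    exact Set.finite_empty

/-- If `𝔯 < 𝔡` then `𝔲 = 𝔯`. -/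
theorem stmt18 (h : reapNumber < domNumber) : ultraNumber = reapNumber := by
  apply le_antisymm
  · have hne : { c : Cardinal | ∃ R : Set (Set ℕ), (∀ y ∈ R, y.Infinite) ∧
        (∀ x : Set ℕ, ∃ y ∈ R, ¬ Splits x y) ∧ c = #R }.Nonempty := by
      refine ⟨_, {y | y.Infinite}, fun y hy => hy, fun x => ?_, rfl⟩
      by_cases hx : x.Infinite
      · exact ⟨x, hx, fun hs => hs.2 (by simp)⟩
      · exact ⟨xᶜ, (Set.not_infinite.1 hx).infinite_compl, fun hs => hs.1 (by simp)⟩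
    obtain ⟨R, hR, hreap, hcard⟩ := csInf_mem hne
    change reapNumber = #R at hcard
    have hinf : R.Infinite := by
      intro hfin
      obtain ⟨x, hx⟩ := not_reaping_of_finite R hR hfin
      obtain ⟨y, hy, hns⟩ := hreap x
      exact hns (hx y hy)
    obtain ⟨G, hG, hle⟩ := exists_base R hR hreap hinf (hcard ▸ h)
    have hu : ultraNumber ≤ #G := csInf_le' ⟨G, hG, rfl⟩
    exact hu.trans (hle.trans hcard.ge)
  · -- The infimum defining `𝔲` is over a nonempty set, as non-principal ultrafilters exist.
    refine le_csInf ⟨_, {X | X ∈ Filter.hyperfilter ℕ}, ⟨Filter.hyperfilter ℕ, fun x => ?_,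
      fun g hg => hg, fun F hF => ⟨F, hF, subset_rfl⟩⟩, rfl⟩ ?_
    · exact (Set.finite_singleton x).notMem_hyperfilter
    · rintro c ⟨G, hG, rfl⟩
      exact reapNumber_le_of_base hG
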